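/- Let g: ℝ⁸ → ℝ be a Schwartz function with g(x) ≤ 0 for all ‖x‖ ≥ √2, ĝ(x) ≥ 0 for all x ∈ ℝ⁸, and g(0) = ĝ(0) = 1. Then g(ℓ) = 0 and ĝ(ℓ) = 0 for every ℓ ∈ Λ8 ∖ {0}. -/

import Mathlib

open MeasureTheory FourierTransform

/-- The `E₈`-lattice `Λ₈ = {x ∈ ℤ⁸ ∪ (ℤ+1/2)⁸ : ∑ xᵢ ≡ 0 (mod 2)}` as a subset of `ℝ⁸`. -/
def Lambda8 : Set (EuclideanSpace ℝ (Fin 8)) :=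
  {x | ((∀ i, ∃ n : ℤ, x i = (n : ℝ)) ∨ (∀ i, ∃ n : ℤ, x i = (n : ℝ) + 1/2)) ∧
    ∃ m : ℤ, ∑ i, x i = 2 * (m : ℝ)}



namespace E8P

abbrev V := Fin 8 → ℝ

def toR (n : Fin 8 → ℤ) : V := fun i => (n i : ℝ)

lemma toR_inj : Function.Injective toR := by
  intro a b h
  funext i
  have := congrFun h i
  simpa [toR] using this

abbrev L : Submodule ℤ V := Submodule.span ℤ (Set.range (Pi.basisFun ℝ (Fin 8)))

lemma toR_mem (n : Fin 8 → ℤ) : toR n ∈ L := by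
  rw [Module.Basis.mem_span_iff_repr_mem]
  intro i
  exact ⟨n i, by simp [toR]⟩

lemma exists_toR (z : L) : ∃ n, toR n = z := by
  have := z.2
  rw [Module.Basis.mem_span_iff_repr_mem] at this
  choose n hn using this
  refine ⟨n, funext fun i => ?_⟩
  have := hn i
  simpa [toR] using this

noncomputable def eqv : (Fin 8 → ℤ) ≃ L :=
  Equiv.ofBijective (fun n => ⟨toR n, toR_mem n⟩)
    ⟨fun a b h => toR_inj (by simpa using h), fun z => by
      obtain ⟨n, hn⟩ := exists_toR z
      exact ⟨n, Subtype.ext hn⟩⟩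

lemma eqv_coe (n) : (eqv n : V) = toR n := rfl

lemma summable_lat : Summable fun n : Fin 8 → ℤ => ((1 + ‖toR n‖)⁻¹) ^ 9 := by
  have hr : Module.finrank ℤ L < 9 := by
    rw [ZLattice.rank ℝ L]; simp
  have h := (ZLattice.summable_norm_sub_inv_pow L 9 hr (fun _ => (1/2 : ℝ))).comp_injective eqv.injective
  refine Summable.of_nonneg_of_le (fun n => by positivity) (fun n => ?_) h
  simp only [Function.comp, eqv_coe]
  have hpos : 0 < ‖toR n - fun _ => (1/2:ℝ)‖ := by
    rw [norm_pos_iff]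
    intro h0
    have := congrFun h0 0
    simp only [toR, Pi.sub_apply, Pi.zero_apply] at this
    have h2 : ((2 * n 0 : ℤ) : ℝ) = (1 : ℤ) := by push_cast; linarith
    have h3 : 2 * n 0 = 1 := by exact_mod_cast h2
    omega
  have hle : ‖toR n - fun _ => (1/2:ℝ)‖ ≤ 1 + ‖toR n‖ := by
    refine (norm_sub_le _ _).trans ?_
    have : ‖(fun _ => (1/2:ℝ) : V)‖ ≤ 1 := by
      rw [pi_norm_le_iff_of_nonneg (by norm_num)]
      intro i; norm_num
    linarith
  gcongr

instance : VAddInvariantMeasure L V volume :=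
  inferInstanceAs (VAddInvariantMeasure L.toAddSubgroup V volume)

instance : MeasurableConstVAdd L V :=
  inferInstanceAs (MeasurableConstVAdd L.toAddSubgroup V)

section psf
variable (φ : V → ℂ)

lemma bound {C : ℝ} (hb : ∀ x, ‖φ x‖ ≤ C * ((1 + ‖x‖)⁻¹) ^ 9) (R : ℝ) (hR : 0 ≤ R) (x : V)
    (hx : ‖x‖ ≤ R) (n : Fin 8 → ℤ) :
    ‖φ (x + toR n)‖ ≤ C * (1 + R) ^ 9 * ((1 + ‖toR n‖)⁻¹) ^ 9 := by
  have hC : 0 ≤ C := by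
    have := (norm_nonneg _).trans (hb 0)
    simpa using this
  refine (hb _).trans ?_
  rw [mul_assoc, ← mul_pow]
  gcongr
  rw [← div_eq_mul_inv, inv_eq_one_div, div_le_div_iff₀ (by positivity) (by positivity)]
  have h1 : ‖toR n‖ ≤ ‖x + toR n‖ + ‖x‖ := by
    have := norm_sub_le (x + toR n) x
    simpa using this
  nlinarith [norm_nonneg (x + toR n), norm_nonneg x]

noncomputable def per (x : V) : ℂ := ∑' n, φ (x + toR n)

lemma per_add (x : V) (m : Fin 8 → ℤ) : per φ (x + toR m) = per φ x := by
  unfold per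
  rw [← (Equiv.addLeft m).tsum_eq (fun n => φ (x + toR n))]
  refine tsum_congr fun n => ?_
  congr 1
  funext i
  simp [toR]; ring

lemma per_cont (hc : Continuous φ) {C : ℝ} (hb : ∀ x, ‖φ x‖ ≤ C * ((1 + ‖x‖)⁻¹) ^ 9) :
    Continuous (per φ) := by
  rw [continuous_iff_continuousAt]
  intro x
  have hR : 0 ≤ ‖x‖ + 1 := by positivity
  have : ContinuousOn (per φ) (Metric.closedBall 0 (‖x‖ + 1)) := by
    refine continuousOn_tsum (u := fun n => C * (1 + (‖x‖ + 1)) ^ 9 * ((1 + ‖toR n‖)⁻¹) ^ 9) ?_ ?_ ?_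
    · intro n; fun_prop
    · exact summable_lat.mul_left _
    · intro n y hy
      exact bound φ hb _ hR y (by simpa using hy) n
  refine this.continuousAt (Metric.closedBall_mem_nhds_of_mem ?_)
  simp

noncomputable def mk (x : V) : UnitAddTorus (Fin 8) := fun i => (x i : UnitAddCircle)

lemma mk_quot : IsOpenQuotientMap mk := by
  have : mk = Pi.map (fun (_ : Fin 8) (x : ℝ) => (x : UnitAddCircle)) := rfl
  rw [this]
  exact IsOpenQuotientMap.piMap fun i => QuotientAddGroup.isOpenQuotientMap_mk

lemma mk_eq {x y : V} (h : mk x = mk y) : ∃ m, y = x + toR m := by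
  have : ∀ i, ∃ m : ℤ, y i = x i + m := by
    intro i
    have := congrFun h i
    simp only [mk] at this
    have h0 : ((y i - x i : ℝ) : UnitAddCircle) = 0 := by
      rw [AddCircle.coe_sub, this, sub_self]
    obtain ⟨k, hk⟩ := (AddCircle.coe_eq_zero_iff (1 : ℝ)).1 h0
    refine ⟨k, ?_⟩
    simp only [zsmul_eq_mul, mul_one] at hk
    linarith
  choose m hm using this
  exact ⟨m, funext hm⟩

noncomputable def F (t : UnitAddTorus (Fin 8)) : ℂ := per φ (Function.surjInv mk_quot.surjective t)

lemma F_mk (x : V) : F φ (mk x) = per φ x := by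
  obtain ⟨m, hm⟩ := mk_eq (Function.surjInv_eq mk_quot.surjective (mk x))
  unfold F
  conv_rhs => rw [hm]
  rw [per_add]

lemma F_cont (h : Continuous (per φ)) : Continuous (F φ) := by
  rw [mk_quot.isQuotientMap.continuous_iff]
  convert h using 1
  funext x
  exact F_mk φ x

noncomputable def e (m : Fin 8 → ℤ) (x : V) : ℂ := UnitAddTorus.mFourier (-m) (mk x)

lemma mk_add (x : V) (n) : mk (x + toR n) = mk x := by
  funext i
  simp [mk, toR]

lemma e_norm (m x) : ‖e m x‖ = 1 := by
  simp only [e, UnitAddTorus.mFourier, fourier_apply, ContinuousMap.coe_mk, norm_prod, Circle.norm_coe,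
    Finset.prod_const_one]

lemma e_cont (m) : Continuous (e m) :=
  (UnitAddTorus.mFourier (-m)).continuous.comp mk_quot.continuous

lemma coeff (hc : Continuous φ) {C : ℝ} (hb : ∀ x, ‖φ x‖ ≤ C * ((1 + ‖x‖)⁻¹) ^ 9)
    (hi : Integrable φ) (m : Fin 8 → ℤ) :
    UnitAddTorus.mFourierCoeff (F φ) m = ∫ x, e m x * φ x := by
  unfold UnitAddTorus.mFourierCoeff
  rw [UnitAddTorus.integral_preimage _ (0 : Fin 8 → ℝ)]
  have hset : ({x : V | ∀ i, x i ∈ Set.Ioc ((0 : V) i) ((0 : V) i + 1)} : Set V) =ᵐ[volume]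
      ZSpan.fundamentalDomain (Pi.basisFun ℝ (Fin 8)) := by
    rw [ZSpan.fundamentalDomain_pi_basisFun]
    have h1 := Measure.univ_pi_Ioc_ae_eq_Icc (μ := fun _ : Fin 8 => (volume : Measure ℝ))
      (f := fun _ => 0) (g := fun _ => 1)
    have h2 := Measure.univ_pi_Ico_ae_eq_Icc (μ := fun _ : Fin 8 => (volume : Measure ℝ))
      (f := fun _ => 0) (g := fun _ => 1)
    have h3 := h1.trans h2.symm
    rw [← volume_pi] at h3
    have h4 : ({x : V | ∀ i, x i ∈ Set.Ioc ((0 : V) i) ((0 : V) i + 1)} : Set V) =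
        Set.univ.pi fun _ => Set.Ioc 0 1 := by
      ext x
      simp [Set.mem_pi]
    rw [h4]
    exact h3
  rw [setIntegral_congr_set hset]
  set D := ZSpan.fundamentalDomain (Pi.basisFun ℝ (Fin 8)) with hD
  have hint : Integrable (fun x => e m x * φ x) := by
    refine hi.bdd_mul (c := 1) (e_cont m).aestronglyMeasurable ?_
    exact Filter.Eventually.of_forall fun x => (e_norm m x).le
  rw [(ZSpan.isAddFundamentalDomain (Pi.basisFun ℝ (Fin 8)) volume).integral_eq_tsum'' _ hint]
  rw [← eqv.tsum_eq]
  have key : ∀ n, ∀ x : V, e m ((eqv n) +ᵥ x) * φ ((eqv n) +ᵥ x) = e m x * φ (x + toR n) := by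
    intro n x
    have : (eqv n) +ᵥ x = x + toR n := by
      rw [Submodule.vadd_def, eqv_coe, vadd_eq_add, add_comm]
    rw [this]
    simp [e, mk_add]
  simp_rw [key]
  have hDb : ∀ x ∈ D, ‖x‖ ≤ 1 := by
    intro x hx
    rw [hD, ZSpan.fundamentalDomain_pi_basisFun] at hx
    rw [pi_norm_le_iff_of_nonneg zero_le_one]
    intro i
    have := hx i trivial
    rw [Real.norm_eq_abs, abs_of_nonneg this.1]
    exact this.2.le
  have hDm : MeasurableSet D := ZSpan.fundamentalDomain_measurableSet _
  have hDf : volume D ≠ ⊤ := by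
    rw [hD, ZSpan.fundamentalDomain_pi_basisFun]
    simp [volume_pi, Measure.pi_pi]
  have hle : ∀ n, ∀ x ∈ D, ‖e m x * φ (x + toR n)‖ ≤ C * (1 + 1) ^ 9 * ((1 + ‖toR n‖)⁻¹) ^ 9 := by
    intro n x hx
    rw [norm_mul, e_norm, one_mul]
    exact bound φ hb 1 zero_le_one x (hDb x hx) n
  have hmeas : ∀ n, Continuous (fun x => e m x * φ (x + toR n)) := by
    intro n
    have := e_cont m
    fun_prop
  have hI : ∀ n, Integrable (fun x => e m x * φ (x + toR n)) (volume.restrict D) := by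
    intro n
    exact IntegrableOn.of_bound hDf.lt_top (hmeas n).aestronglyMeasurable _
      ((ae_restrict_iff' hDm).2 (Filter.Eventually.of_forall (hle n)))
  rw [integral_tsum_of_summable_integral_norm hI]
  · refine integral_congr_ae (Filter.Eventually.of_forall fun x => ?_)
    simp only [smul_eq_mul]
    rw [tsum_mul_left]
    exact congrArg (e m x * ·) (F_mk φ x)
  · refine Summable.of_nonneg_of_le (fun n => by positivity) (fun n => ?_)
      ((summable_lat.mul_left (C * (1 + 1) ^ 9)).mul_right (volume.real D))
    have := norm_setIntegral_le_of_norm_le_const (μ := volume) (f := fun x => ‖e m x * φ (x + toR n)‖)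
      hDf.lt_top (C := C * (1 + 1) ^ 9 * ((1 + ‖toR n‖)⁻¹) ^ 9) (by
        intro x hx; rw [norm_norm]; exact hle n x hx)
    exact (le_abs_self _).trans this

lemma psf (hc : Continuous φ) {C : ℝ} (hb : ∀ x, ‖φ x‖ ≤ C * ((1 + ‖x‖)⁻¹) ^ 9)
    (hi : Integrable φ) (hs : Summable fun m => ∫ x, e m x * φ x) :
    HasSum (fun m => ∫ x, e m x * φ x) (∑' n, φ (toR n)) := by
  let G : C(UnitAddTorus (Fin 8), ℂ) := ⟨F φ, F_cont φ (per_cont φ hc hb)⟩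
  have hco : ∀ m, UnitAddTorus.mFourierCoeff G m = ∫ x, e m x * φ x := coeff φ hc hb hi
  have := UnitAddTorus.hasSum_mFourier_series_apply_of_summable (f := G)
    (by simpa only [funext hco] using hs) (mk 0)
  simp_rw [hco] at this
  have h0 : G (mk 0) = ∑' n, φ (toR n) := by
    change F φ (mk 0) = _
    rw [F_mk]; simp [per]
  rw [h0] at this
  convert this using 2 with m
  simp [UnitAddTorus.mFourier, mk]

end psf

abbrev E := EuclideanSpace ℝ (Fin 8)

/-- The continuous linear equivalence given by an invertible matrix. -/
noncomputable def eqM (M N : Matrix (Fin 8) (Fin 8) ℝ) (h1 : M * N = 1) (h2 : N * M = 1) :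
    V ≃L[ℝ] E :=
  (Matrix.toLin'OfInv h2 h1).toContinuousLinearEquiv.trans
    (PiLp.continuousLinearEquiv 2 ℝ (fun _ : Fin 8 => ℝ)).symm

lemma eqM_apply (M N h1 h2) (x : V) : eqM M N h1 h2 x = WithLp.toLp 2 (M.mulVec x) := by
  simp [eqM, Matrix.toLin'OfInv]

lemma schwartz_bound (ψ : SchwartzMap V ℂ) :
    ∃ C : ℝ, ∀ x, ‖ψ x‖ ≤ C * ((1 + ‖x‖)⁻¹) ^ 9 := by
  refine ⟨2 ^ 9 * (Finset.Iic (9, 0)).sup (fun m => SchwartzMap.seminorm ℝ m.1 m.2) ψ, fun x => ?_⟩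
  have := SchwartzMap.one_add_le_sup_seminorm_apply (𝕜 := ℝ) (m := (9, 0)) (k := 9) (n := 0)
    le_rfl le_rfl ψ x
  rw [norm_iteratedFDeriv_zero] at this
  rw [inv_pow, ← div_eq_mul_inv, le_div_iff₀ (by positivity), mul_comm]
  exact this

lemma schwartz_summable (ψ : SchwartzMap V ℂ) : Summable fun n => ψ (toR n) := by
  obtain ⟨C, hC⟩ := schwartz_bound ψ
  exact Summable.of_norm_bounded (summable_lat.mul_left C) fun n => hC _

lemma e_eq (m : Fin 8 → ℤ) (x : V) :
    e m x = Complex.exp (((-2 * Real.pi * ∑ i, x i * m i : ℝ) : ℂ) * Complex.I) := by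
  simp only [e, UnitAddTorus.mFourier, mk, ContinuousMap.coe_mk, fourier_coe_apply]
  rw [← Complex.exp_sum]
  congr 1
  push_cast
  rw [Finset.mul_sum, Finset.sum_mul]
  refine Finset.sum_congr rfl fun i _ => ?_
  simp
  ring

lemma mp (M N h1 h2) (hd : M.det = 1) : MeasurePreserving (eqM M N h1 h2) := by
  have hA : MeasurePreserving (Matrix.toLin' M) (volume : Measure V) volume := by
    refine ⟨(Matrix.toLin' M).continuous_of_finiteDimensional.measurable, ?_⟩
    rw [Real.map_matrix_volume_pi_eq_smul_volume_pi (by rw [hd]; norm_num), hd]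
    simp
  have h := (PiLp.volume_preserving_toLp (Fin 8)).comp hA
  have he : ⇑(eqM M N h1 h2) = (WithLp.toLp 2) ∘ (Matrix.toLin' M) := by
    funext x
    rw [eqM_apply]
    rfl
  rw [he]
  exact h

lemma psfM (M N : Matrix (Fin 8) (Fin 8) ℝ) (h1 : M * N = 1) (h2 : N * M = 1) (hd : M.det = 1)
    (f : SchwartzMap E ℂ) :
    Summable (fun n => f (WithLp.toLp 2 (M.mulVec (toR n)))) ∧
    HasSum (fun m => 𝓕 (fun y => f y) (WithLp.toLp 2 (N.transpose.mulVec (toR m)) : E))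
      (∑' n, f (WithLp.toLp 2 (M.mulVec (toR n)))) := by
  let ψ : SchwartzMap V ℂ := SchwartzMap.compCLMOfContinuousLinearEquiv ℝ (eqM M N h1 h2) f
  have t1 : N.transpose * M.transpose = 1 := by rw [← Matrix.transpose_mul, h1, Matrix.transpose_one]
  have t2 : M.transpose * N.transpose = 1 := by rw [← Matrix.transpose_mul, h2, Matrix.transpose_one]
  let χ : SchwartzMap V ℂ := SchwartzMap.compCLMOfContinuousLinearEquiv ℝ
    (eqM N.transpose M.transpose t1 t2) (𝓕 f)
  have hψ : ∀ x, ψ x = f (WithLp.toLp 2 (M.mulVec x)) := fun x => by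
    rw [← eqM_apply M N h1 h2]; rfl
  have hχ : ∀ x, χ x = 𝓕 (fun y => f y) (WithLp.toLp 2 (N.transpose.mulVec x) : E) := fun x => by
    rw [← eqM_apply N.transpose M.transpose t1 t2]; rfl
  have hcoef : ∀ m, ∫ x, e m x * ψ x = χ (toR m) := by
    intro m
    rw [hχ, Real.fourier_eq', ← (mp M N h1 h2 hd).integral_comp
      (eqM M N h1 h2).toHomeomorph.measurableEmbedding]
    refine integral_congr_ae (Filter.Eventually.of_forall fun x => ?_)
    simp only [eqM_apply, smul_eq_mul]
    rw [e_eq, hψ]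
    congr 5
    have : inner ℝ (WithLp.toLp 2 (M.mulVec x) : E) (WithLp.toLp 2 (N.transpose.mulVec (toR m)))
        = (M.mulVec x) ⬝ᵥ (N.transpose.mulVec (toR m)) := by
      rw [EuclideanSpace.inner_toLp_toLp, dotProduct_comm]
      simp
    rw [this, Matrix.mulVec_transpose, dotProduct_comm, ← Matrix.dotProduct_mulVec,
      Matrix.mulVec_mulVec, h2, Matrix.one_mulVec, dotProduct_comm]
    rfl
  refine ⟨by simpa only [hψ] using schwartz_summable ψ, ?_⟩
  obtain ⟨C, hC⟩ := schwartz_bound ψ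
  have := psf ψ ψ.continuous hC ψ.integrable (by
    simp_rw [hcoef]; exact schwartz_summable χ)
  simp_rw [hcoef] at this
  simp_rw [hψ, hχ] at this
  exact this

noncomputable def M8 : Matrix (Fin 8) (Fin 8) ℝ :=
  !![2, -1, 0, 0, 0, 0, 0, 1/2;
     0, 1, -1, 0, 0, 0, 0, 1/2;
     0, 0, 1, -1, 0, 0, 0, 1/2;
     0, 0, 0, 1, -1, 0, 0, 1/2;
     0, 0, 0, 0, 1, -1, 0, 1/2;
     0, 0, 0, 0, 0, 1, -1, 1/2;
     0, 0, 0, 0, 0, 0, 1, 1/2;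
     0, 0, 0, 0, 0, 0, 0, 1/2]

lemma M8_det : M8.det = 1 := by
  rw [Matrix.det_of_isUpperTriangular]
  · simp [Fin.prod_univ_eight, M8]
  · intro i j hij
    fin_cases i <;> fin_cases j <;> simp [M8] at hij ⊢

lemma M8_mulVec (x : V) : M8.mulVec x = ![2 * x 0 - x 1 + x 7 / 2, x 1 - x 2 + x 7 / 2,
    x 2 - x 3 + x 7 / 2, x 3 - x 4 + x 7 / 2, x 4 - x 5 + x 7 / 2, x 5 - x 6 + x 7 / 2,
    x 6 + x 7 / 2, x 7 / 2] := by
  funext i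
  fin_cases i <;> simp [M8, Matrix.mulVec, dotProduct, Fin.sum_univ_eight] <;> ring

lemma M8T_mulVec (x : V) : M8.transpose.mulVec x = ![2 * x 0, x 1 - x 0, x 2 - x 1, x 3 - x 2,
    x 4 - x 3, x 5 - x 4, x 6 - x 5, (∑ i, x i) / 2] := by
  funext i
  fin_cases i <;> simp [M8, Matrix.mulVec, dotProduct, Fin.sum_univ_eight] <;> ring

lemma M8_norm (n : Fin 8 → ℤ) (h : M8.mulVec (toR n) ≠ 0) :
    Real.sqrt 2 ≤ ‖(WithLp.toLp 2 (M8.mulVec (toR n)) : E)‖ := by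
  have hpos : 0 < ‖(WithLp.toLp 2 (M8.mulVec (toR n)) : E)‖ ^ 2 := by
    have : (WithLp.toLp 2 (M8.mulVec (toR n)) : E) ≠ 0 := by
      intro h0; exact h (by simpa using h0)
    positivity
  apply Real.sqrt_le_iff.2
  refine ⟨norm_nonneg _, ?_⟩
  have : ‖(WithLp.toLp 2 (M8.mulVec (toR n)) : E)‖ ^ 2 = 2 * ((2 * n 0 ^ 2 + n 1 ^ 2 + n 2 ^ 2
      + n 3 ^ 2 + n 4 ^ 2 + n 5 ^ 2 + n 6 ^ 2 + n 7 ^ 2 - 2 * n 0 * n 1 - n 1 * n 2 - n 2 * n 3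
      - n 3 * n 4 - n 4 * n 5 - n 5 * n 6 + n 0 * n 7 : ℤ) : ℝ) := by
    rw [EuclideanSpace.norm_sq_eq, M8_mulVec]
    simp [Fin.sum_univ_eight, toR]
    ring
  rw [this] at hpos ⊢
  have h0 := (mul_pos_iff_of_pos_left (by norm_num : (0:ℝ) < 2)).1 hpos
  have h1 := Int.add_one_le_iff.2 (Int.cast_pos.1 h0)
  have h2 : ((1 : ℤ) : ℝ) ≤ _ := Int.cast_le.2 h1
  push_cast at h2 ⊢
  linarith

lemma mem_int {x : E} (hx : x ∈ Lambda8) : ∃ n, M8.mulVec (toR n) = x.ofLp := by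
  obtain ⟨h, m, hm⟩ := hx
  obtain ⟨k, s, hk, hs⟩ : ∃ k : Fin 8 → ℤ, ∃ s : ℤ, (∀ i, x i = k i + s / 2) ∧ True := by
    rcases h with h | h
    · choose k hk using h
      exact ⟨k, 0, fun i => by simp [hk], trivial⟩
    · choose k hk using h
      exact ⟨k, 1, fun i => by simp [hk], trivial⟩
  simp only [Fin.sum_univ_eight] at hm
  refine ⟨![m - 4 * k 7 - 2 * s - 0, k 1 + k 2 + k 3 + k 4 + k 5 + k 6 - 6 * k 7,
    k 2 + k 3 + k 4 + k 5 + k 6 - 5 * k 7, k 3 + k 4 + k 5 + k 6 - 4 * k 7,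
    k 4 + k 5 + k 6 - 3 * k 7, k 5 + k 6 - 2 * k 7, k 6 - k 7, 2 * k 7 + s], ?_⟩
  rw [M8_mulVec]
  simp only [hk] at hm
  funext i
  fin_cases i <;> simp [toR, hk] <;> linarith

lemma mem_intT {x : E} (hx : x ∈ Lambda8) : ∃ n, M8.transpose.mulVec x.ofLp = toR n := by
  obtain ⟨h, m, hm⟩ := hx
  obtain ⟨k, s, hk, hs⟩ : ∃ k : Fin 8 → ℤ, ∃ s : ℤ, (∀ i, x i = k i + s / 2) ∧ True := by
    rcases h with h | h
    · choose k hk using h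
      exact ⟨k, 0, fun i => by simp [hk], trivial⟩
    · choose k hk using h
      exact ⟨k, 1, fun i => by simp [hk], trivial⟩
  refine ⟨![2 * k 0 + s, k 1 - k 0, k 2 - k 1, k 3 - k 2, k 4 - k 3, k 5 - k 4, k 6 - k 5, m], ?_⟩
  rw [M8T_mulVec, hm]
  funext i
  fin_cases i <;> simp [toR, hk]
  ring

end E8P

/-- If `g : ℝ⁸ → ℝ` is a Schwartz function with `g(x) ≤ 0` for `‖x‖ ≥ √2`, `ĝ(x) ≥ 0` for all
`x ∈ ℝ⁸`, and `g(0) = ĝ(0) = 1`, then `g(ℓ) = 0` and `ĝ(ℓ) = 0` for every `ℓ ∈ Λ₈ \ {0}`. -/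
theorem optimal_function_vanishes_on_E8 (g : SchwartzMap (EuclideanSpace ℝ (Fin 8)) ℝ)
    (hg : ∀ x, Real.sqrt 2 ≤ ‖x‖ → g x ≤ 0)
    (hghat : ∀ x, ∃ c : ℝ, 0 ≤ c ∧ 𝓕 (fun y => (g y : ℂ)) x = c)
    (hg0 : g 0 = 1) (hghat0 : 𝓕 (fun y => (g y : ℂ)) 0 = 1) :
    ∀ ℓ ∈ Lambda8, ℓ ≠ 0 → g ℓ = 0 ∧ 𝓕 (fun y => (g y : ℂ)) ℓ = 0 := by
  classical
  have hu : IsUnit E8P.M8.det := by rw [E8P.M8_det]; exact isUnit_one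
  have h1 := Matrix.mul_nonsing_inv E8P.M8 hu
  have h2 := Matrix.nonsing_inv_mul E8P.M8 hu
  set N := (E8P.M8)⁻¹ with hN
  let f : SchwartzMap (EuclideanSpace ℝ (Fin 8)) ℂ := g.postcompCLM Complex.ofRealCLM
  obtain ⟨hs, hS⟩ := E8P.psfM E8P.M8 N h1 h2 E8P.M8_det f
  have hf : ∀ x, f x = (g x : ℂ) := fun x => rfl
  simp only [hf] at hs hS
  choose c hc0 hc using hghat
  have h10 : c 0 = 1 := by
    have := hc 0
    rw [hghat0] at this
    exact_mod_cast this.symm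
  simp only [hc] at hS
  set a : (Fin 8 → ℤ) → ℝ := fun n => g (WithLp.toLp 2 (E8P.M8.mulVec (E8P.toR n))) with ha
  set b : (Fin 8 → ℤ) → ℝ := fun n => c (WithLp.toLp 2 (N.transpose.mulVec (E8P.toR n))) with hb
  have hsa : Summable a := Complex.summable_ofReal.1 hs
  have hSb : HasSum b (∑' n, a n) := by
    rw [← Complex.ofReal_tsum] at hS
    exact Complex.hasSum_ofReal.1 hS
  have hz : E8P.toR 0 = 0 := by funext i; simp [E8P.toR]
  have ha0 : a 0 = 1 := by simp [ha, hz, hg0]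
  have hb0 : b 0 = 1 := by simp [hb, hz, h10]
  have hinj : ∀ n, n ≠ 0 → E8P.M8.mulVec (E8P.toR n) ≠ 0 := by
    intro n hn h
    apply hn
    apply E8P.toR_inj
    rw [hz]
    have := congrArg (N.mulVec) h
    rwa [Matrix.mulVec_mulVec, h2, Matrix.one_mulVec, Matrix.mulVec_zero] at this
  have han : ∀ n, n ≠ 0 → a n ≤ 0 := fun n hn => hg _ (E8P.M8_norm n (hinj n hn))
  have hbn : ∀ n, 0 ≤ b n := fun n => hc0 _
  have hd := hSb.sub hsa.hasSum
  rw [sub_self] at hd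
  have hnn : ∀ n, 0 ≤ b n - a n := by
    intro n
    by_cases hn : n = 0
    · subst hn; rw [ha0, hb0, sub_self]
    · linarith [han n hn, hbn n]
  have hzero := (hasSum_zero_iff_of_nonneg hnn).1 hd
  have hfin : ∀ n, n ≠ 0 → a n = 0 ∧ b n = 0 := by
    intro n hn
    have := congrFun hzero n
    simp only [Pi.zero_apply] at this
    constructor <;> linarith [han n hn, hbn n]
  intro ℓ hℓ hne
  constructor
  · obtain ⟨n, hn⟩ := E8P.mem_int hℓ
    have hn0 : n ≠ 0 := by
      rintro rfl
      rw [hz, Matrix.mulVec_zero] at hn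
      exact hne (by ext i; simpa using (congrFun hn i).symm)
    have := (hfin n hn0).1
    simpa [ha, hn] using this
  · obtain ⟨n, hn⟩ := E8P.mem_intT hℓ
    have hN' : N.transpose.mulVec (E8P.toR n) = ℓ.ofLp := by
      rw [← hn, Matrix.mulVec_mulVec, ← Matrix.transpose_mul, h1, Matrix.transpose_one,
        Matrix.one_mulVec]
    have hn0 : n ≠ 0 := by
      rintro rfl
      rw [hz, Matrix.mulVec_zero] at hN'
      exact hne (by ext i; simpa using (congrFun hN' i).symm)
    have := (hfin n hn0).2
    rw [hc]
    simp only [hb, hN'] at this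
    simpa using this
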